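/- Let T be a universal continuous first-order theory. Then the set of separable existentially closed models of T is dense in 𝔖_T. -/

import Mathlib

open scoped Classical

/-! ### A core of continuous first-order logic (countable relational signatures) -/

/-- A countable relational continuous signature: relation symbols indexed by `ℕ`
(with a distinguished metric symbol handled separately in the syntax below),
each with an arity and a prescribed uniform-continuity modulus. -/
structure CSig where
  arity : ℕ → ℕ
  modulus : ℕ → ℝ → ℝ
  modulus_pos : ∀ i ε, 0 < ε → 0 < modulus i ε

/-- Continuous first-order formulas over `S`, with free variables among `Fin n`.
Connectives: rational constants, pointwise min and max, negation `1 - x`,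
truncated plus, truncated minus, `|x - y|`, rescaling by rationals; quantifiers
`inf` and `sup` bind the last variable. -/
inductive CFormula (S : CSig) : ℕ → Type
  | dst : ∀ {n}, Fin n → Fin n → CFormula S n
  | rel : ∀ {n} (i : ℕ), (Fin (S.arity i) → Fin n) → CFormula S n
  | const : ∀ {n}, ℚ → CFormula S n
  | fmin : ∀ {n}, CFormula S n → CFormula S n → CFormula S n
  | fmax : ∀ {n}, CFormula S n → CFormula S n → CFormula S n
  | neg : ∀ {n}, CFormula S n → CFormula S n
  | addT : ∀ {n}, CFormula S n → CFormula S n → CFormula S n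
  | subT : ∀ {n}, CFormula S n → CFormula S n → CFormula S n
  | absd : ∀ {n}, CFormula S n → CFormula S n → CFormula S n
  | scale : ∀ {n}, ℚ → CFormula S n → CFormula S n
  | inf : ∀ {n}, CFormula S (n + 1) → CFormula S n
  | sup : ∀ {n}, CFormula S (n + 1) → CFormula S n

/-- Sentences: formulas with no free variables. -/
abbrev CSentence (S : CSig) := CFormula S 0

/-- Quantifier-free formulas. -/
inductive IsQF {S : CSig} : ∀ {n}, CFormula S n → Prop
  | dst {n} (a b : Fin n) : IsQF (CFormula.dst a b)
  | rel {n} (i : ℕ) (ts : Fin (S.arity i) → Fin n) : IsQF (CFormula.rel i ts)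
  | const {n} (q : ℚ) : IsQF (CFormula.const (n := n) q)
  | fmin {n} {φ ψ : CFormula S n} : IsQF φ → IsQF ψ → IsQF (CFormula.fmin φ ψ)
  | fmax {n} {φ ψ : CFormula S n} : IsQF φ → IsQF ψ → IsQF (CFormula.fmax φ ψ)
  | neg {n} {φ : CFormula S n} : IsQF φ → IsQF (CFormula.neg φ)
  | addT {n} {φ ψ : CFormula S n} : IsQF φ → IsQF ψ → IsQF (CFormula.addT φ ψ)
  | subT {n} {φ ψ : CFormula S n} : IsQF φ → IsQF ψ → IsQF (CFormula.subT φ ψ)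
  | absd {n} {φ ψ : CFormula S n} : IsQF φ → IsQF ψ → IsQF (CFormula.absd φ ψ)
  | scale {n} (q : ℚ) {φ : CFormula S n} : IsQF φ → IsQF (CFormula.scale q φ)

/-- Closure of a class of formulas under (finitely many applications of) `inf`. -/
inductive InfCl {S : CSig} (P : ∀ n, CFormula S n → Prop) : ∀ {n}, CFormula S n → Prop
  | base {n} {φ : CFormula S n} : P n φ → InfCl P φ
  | step {n} {φ : CFormula S (n + 1)} : InfCl P φ → InfCl P (CFormula.inf φ)

/-- Closure of a class of formulas under (finitely many applications of) `sup`. -/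
inductive SupCl {S : CSig} (P : ∀ n, CFormula S n → Prop) : ∀ {n}, CFormula S n → Prop
  | base {n} {φ : CFormula S n} : P n φ → SupCl P φ
  | step {n} {φ : CFormula S (n + 1)} : SupCl P φ → SupCl P (CFormula.sup φ)

/-- The pair (Σₖ, Πₖ) of formula classes: Σ₀ = Π₀ = quantifier-free,
Σ_{k+1} = { inf_x̄ φ : φ ∈ Πₖ }, Π_{k+1} = { sup_x̄ φ : φ ∈ Σₖ }. -/
def SigmaPi (S : CSig) : ℕ → ((∀ n, CFormula S n → Prop) × (∀ n, CFormula S n → Prop))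
  | 0 => (fun _ φ => IsQF φ, fun _ φ => IsQF φ)
  | k + 1 => (fun _ φ => InfCl (SigmaPi S k).2 φ, fun _ φ => SupCl (SigmaPi S k).1 φ)

/-- `φ` is a Σₖ formula. -/
def IsSigmaN (S : CSig) (k : ℕ) {n : ℕ} (φ : CFormula S n) : Prop := (SigmaPi S k).1 n φ

/-- `φ` is a Πₖ formula. -/
def IsPiN (S : CSig) (k : ℕ) {n : ℕ} (φ : CFormula S n) : Prop := (SigmaPi S k).2 n φ

/-- A continuous `L`-structure: a nonempty complete metric space of diameter `≤ 1`
with `[0,1]`-valued interpretations of all predicate symbols, uniformly continuous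
with respect to the prescribed moduli. -/
structure CStructure (S : CSig) where
  Carrier : Type
  metric : MetricSpace Carrier
  nonempty : Nonempty Carrier
  complete : @CompleteSpace Carrier metric.toUniformSpace
  bounded : ∀ x y : Carrier, @dist Carrier metric.toDist x y ≤ 1
  rel : ∀ i, (Fin (S.arity i) → Carrier) → ℝ
  rel_nonneg : ∀ i v, 0 ≤ rel i v
  rel_le_one : ∀ i v, rel i v ≤ 1
  rel_uc : ∀ i (ε : ℝ), 0 < ε → ∀ v w,
    (∀ j, @dist Carrier metric.toDist (v j) (w j) < S.modulus i ε) → |rel i v - rel i w| ≤ ε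

attribute [instance] CStructure.metric CStructure.nonempty CStructure.complete

/-- Clamp a rational constant into `[0,1]`. -/
noncomputable def clampQ (q : ℚ) : ℝ := max 0 (min 1 (q : ℝ))

/-- The value of a formula in a structure under a variable assignment. -/
noncomputable def CStructure.eval {S : CSig} (M : CStructure S) :
    ∀ (n : ℕ), CFormula S n → (Fin n → M.Carrier) → ℝ
  | _, .dst a b, v => dist (v a) (v b)
  | _, .rel i ts, v => M.rel i fun j => v (ts j)
  | _, .const q, _ => clampQ q
  | n, .fmin φ ψ, v => min (M.eval n φ v) (M.eval n ψ v)
  | n, .fmax φ ψ, v => max (M.eval n φ v) (M.eval n ψ v)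
  | n, .neg φ, v => 1 - M.eval n φ v
  | n, .addT φ ψ, v => min 1 (M.eval n φ v + M.eval n ψ v)
  | n, .subT φ ψ, v => max 0 (M.eval n φ v - M.eval n ψ v)
  | n, .absd φ ψ, v => |M.eval n φ v - M.eval n ψ v|
  | n, .scale q φ, v => clampQ q * M.eval n φ v
  | n, .inf φ, v => ⨅ x : M.Carrier, M.eval (n + 1) φ (Fin.snoc v x)
  | n, .sup φ, v => ⨆ x : M.Carrier, M.eval (n + 1) φ (Fin.snoc v x)

/-- The value of a sentence in a structure. -/
noncomputable def CStructure.sval {S : CSig} (M : CStructure S) (φ : CSentence S) : ℝ :=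
  M.eval 0 φ (fun i => i.elim0)

/-- A theory: a set of closed conditions `φ ≤ ε`, coded as pairs `(φ, ε)`. -/
abbrev CTheory (S : CSig) := Set (CSentence S × ℝ)

/-- `M` satisfies the theory `T` (all its closed conditions). -/
def CStructure.SatT {S : CSig} (M : CStructure S) (T : CTheory S) : Prop :=
  ∀ c ∈ T, M.sval c.1 ≤ c.2

/-- The closed condition `φ ≤ ε` follows from `T`. -/
def Entails {S : CSig} (T : CTheory S) (c : CSentence S × ℝ) : Prop :=
  ∀ M : CStructure S, M.SatT T → M.sval c.1 ≤ c.2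

/-- The open condition `φ < ε` follows from `T`. -/
def EntailsOpen {S : CSig} (T : CTheory S) (c : CSentence S × ℝ) : Prop :=
  ∀ M : CStructure S, M.SatT T → M.sval c.1 < c.2

/-- `T` is a theory in the official sense: consistent and closed under entailment. -/
def IsTheory {S : CSig} (T : CTheory S) : Prop :=
  (∃ M : CStructure S, M.SatT T) ∧ ∀ c, Entails T c → c ∈ T

/-- `T` is universal: axiomatizable by closed conditions `sup_x̄ φ(x̄) = 0` with `φ`
quantifier-free (i.e. by conditions `ψ = 0` for Π₁ sentences `ψ`). -/
def IsUniversalTheory {S : CSig} (T : CTheory S) : Prop :=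
  ∃ A : Set (CSentence S), (∀ ψ ∈ A, IsPiN S 1 ψ) ∧
    ∀ M : CStructure S, (M.SatT T ↔ ∀ ψ ∈ A, M.sval ψ = 0)

/-- `T` is inductive: axiomatizable by open conditions `sup_x̄ inf_ȳ φ(x̄,ȳ) < ε` with `φ`
quantifier-free (i.e. by open conditions on Π₂ sentences). -/
def IsInductiveTheory {S : CSig} (T : CTheory S) : Prop :=
  ∃ A : Set (CSentence S × ℝ), (∀ c ∈ A, IsPiN S 2 c.1 ∧ 0 < c.2) ∧
    ∀ M : CStructure S, (M.SatT T ↔ ∀ c ∈ A, M.sval c.1 < c.2)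

/-- An embedding of continuous structures: an isometric map preserving all predicates. -/
structure CEmbedding {S : CSig} (M N : CStructure S) where
  toFun : M.Carrier → N.Carrier
  isometry : ∀ x y, dist (toFun x) (toFun y) = dist x y
  map_rel : ∀ i (v : Fin (S.arity i) → M.Carrier), N.rel i (toFun ∘ v) = M.rel i v

/-- An embedding is elementary if it preserves the values of all formulas. -/
def CEmbedding.Elementary {S : CSig} {M N : CStructure S} (f : CEmbedding M N) : Prop :=
  ∀ (n : ℕ) (φ : CFormula S n) (v : Fin n → M.Carrier),
    N.eval n φ (f.toFun ∘ v) = M.eval n φ v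

/-- `T` is model complete: every embedding between models of `T` is elementary. -/
def IsModelComplete {S : CSig} (T : CTheory S) : Prop :=
  ∀ M N : CStructure S, M.SatT T → N.SatT T → ∀ f : CEmbedding M N, f.Elementary

/-- `M` is an existentially closed model of `T`. -/
def IsEC {S : CSig} (T : CTheory S) (M : CStructure S) : Prop :=
  M.SatT T ∧ ∀ N : CStructure S, N.SatT T → ∀ f : CEmbedding M N,
    ∀ (n : ℕ) (φ : CFormula S (n + 1)), IsQF φ → ∀ b : Fin n → M.Carrier,
      N.eval n (CFormula.inf φ) (f.toFun ∘ b) = M.eval n (CFormula.inf φ) b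

/-- `T'` is the model companion of `T`: the models of `T'` are exactly the
existentially closed models of `T`. -/
def IsModelCompanion {S : CSig} (T T' : CTheory S) : Prop :=
  ∀ M : CStructure S, (M.SatT T' ↔ IsEC T M)

/-- `T'` is ℵ₀-categorical: any two separable models of `T'` are isomorphic. -/
def Aleph0Categorical {S : CSig} (T' : CTheory S) : Prop :=
  ∀ M N : CStructure S, M.SatT T' → N.SatT T' →
    TopologicalSpace.SeparableSpace M.Carrier → TopologicalSpace.SeparableSpace N.Carrier →
    ∃ f : CEmbedding M N, Function.Surjective f.toFun

/-! ### The Polish space `𝔖` of codes of separable structures -/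

/-- A point of `𝔖`: a separable continuous `L`-structure presented on a distinguished
countable dense subset indexed by `ℕ` — i.e. the metric and all predicate values on `ℕ`,
subject to the metric axioms and the uniform-continuity moduli. The actual structure is
the completion; since all predicates and the quantifiers are continuous, all the
first-order data is determined by this code. -/
structure SCode (S : CSig) where
  dd : ℕ → ℕ → ℝ
  R : ∀ i, (Fin (S.arity i) → ℕ) → ℝ
  dd_nonneg : ∀ i j, 0 ≤ dd i j
  dd_le_one : ∀ i j, dd i j ≤ 1
  dd_self : ∀ i, dd i i = 0
  dd_pos : ∀ i j, i ≠ j → 0 < dd i j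
  dd_symm : ∀ i j, dd i j = dd j i
  dd_triangle : ∀ i j k, dd i k ≤ dd i j + dd j k
  R_nonneg : ∀ i v, 0 ≤ R i v
  R_le_one : ∀ i v, R i v ≤ 1
  R_uc : ∀ i (ε : ℝ), 0 < ε → ∀ v w,
    (∀ j, dd (v j) (w j) < S.modulus i ε) → |R i v - R i w| ≤ ε

/-- Value of a formula on a code, under an assignment of variables to points of the
distinguished dense subset; quantifiers range over the dense subset (equivalently,
by uniform continuity, over the completion). -/
noncomputable def SCode.eval {S : CSig} (x : SCode S) :
    ∀ (n : ℕ), CFormula S n → (Fin n → ℕ) → ℝ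
  | _, .dst a b, v => x.dd (v a) (v b)
  | _, .rel i ts, v => x.R i fun j => v (ts j)
  | _, .const q, _ => clampQ q
  | n, .fmin φ ψ, v => min (x.eval n φ v) (x.eval n ψ v)
  | n, .fmax φ ψ, v => max (x.eval n φ v) (x.eval n ψ v)
  | n, .neg φ, v => 1 - x.eval n φ v
  | n, .addT φ ψ, v => min 1 (x.eval n φ v + x.eval n ψ v)
  | n, .subT φ ψ, v => max 0 (x.eval n φ v - x.eval n ψ v)
  | n, .absd φ ψ, v => |x.eval n φ v - x.eval n ψ v|
  | n, .scale q φ, v => clampQ q * x.eval n φ v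
  | n, .inf φ, v => ⨅ k : ℕ, x.eval (n + 1) φ (Fin.snoc v k)
  | n, .sup φ, v => ⨆ k : ℕ, x.eval (n + 1) φ (Fin.snoc v k)

/-- The value of a sentence on a code. -/
noncomputable def SCode.sval {S : CSig} (x : SCode S) (φ : CSentence S) : ℝ :=
  x.eval 0 φ (fun i => i.elim0)

/-- The structure coded by `x` satisfies the theory `T`. -/
def SCode.SatT {S : CSig} (x : SCode S) (T : CTheory S) : Prop :=
  ∀ c ∈ T, x.sval c.1 ≤ c.2

/-- The basic open set `U_{φ(ā),ε} = {x ∈ 𝔖 : φ^x(ā) < ε}`. -/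
def basicSet {S : CSig} (n : ℕ) (φ : CFormula S n) (a : Fin n → ℕ) (ε : ℝ) :
    Set (SCode S) :=
  {x | x.eval n φ a < ε}

/-- The topology on `𝔖` generated by the basic open sets `U_{φ(ā),ε}` for `φ`
quantifier-free, `ā` a tuple from the distinguished dense subset and `ε > 0`. -/
instance SCode.topologicalSpace (S : CSig) : TopologicalSpace (SCode S) :=
  TopologicalSpace.generateFrom
    {U | ∃ (n : ℕ) (φ : CFormula S n) (a : Fin n → ℕ) (ε : ℝ),
      IsQF φ ∧ 0 < ε ∧ U = basicSet n φ a ε}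

/-- `x` codes the structure `M`: the distinguished countable dense subset maps to a dense
sequence in `M` realizing exactly the metric and predicate values recorded in `x`
(i.e. `M` is "the completion" of `x`). For a fixed `M`, `{x ∈ 𝔖 : Codes x M}` is
precisely the isomorphism class of `M` in `𝔖`. -/
def Codes {S : CSig} (x : SCode S) (M : CStructure S) : Prop :=
  ∃ u : ℕ → M.Carrier, DenseRange u ∧ (∀ i j, dist (u i) (u j) = x.dd i j) ∧
    ∀ i (v : Fin (S.arity i) → ℕ), M.rel i (u ∘ v) = x.R i v

/-!
A violated universal axiom is already violated by finitely many points, so if the atomic diagram of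
a dense family agrees, on every finite set of names, with the diagram of a model of `T`, then the
whole structure is a model of `T`.

Starting from a model of `T` and a countable family in it, fresh names are added one at a time. At
stage `s` the new name nearly minimizes, with tolerance `1 / (s + 1)`, the `s`-th expression
`φ(x̄, y)` in `y`, where all models of `T` with the current diagram on the names in use are
allowed to compete; each expression recurs infinitely often. The diagrams converge, and the
completion `N` of the limit is existentially closed: any extension of `N` to a model of `T` was a
competitor at every stage, so its infima are not smaller than those of `N`.

The original family keeps its diagram in `N`. A basic open set mentions finitely many points only,
so dense enumerations of `N` that start with longer and longer initial segments of the family give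
codes of `N` converging to the given code.
-/

/-- A Gödel numbering of formulas, used only for countability of the set of formulas. -/
def CFormula.godelNumber {S : CSig} : ∀ {n : ℕ}, CFormula S n → ℕ
  | _, .dst a b => Nat.pair 0 (Nat.pair a b)
  | _, .rel i ts => Nat.pair 1 (Nat.pair i (Encodable.encode ts))
  | _, .const q => Nat.pair 2 (Encodable.encode q)
  | _, .fmin φ ψ => Nat.pair 3 (Nat.pair φ.godelNumber ψ.godelNumber)
  | _, .fmax φ ψ => Nat.pair 4 (Nat.pair φ.godelNumber ψ.godelNumber)
  | _, .neg φ => Nat.pair 5 φ.godelNumber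
  | _, .addT φ ψ => Nat.pair 6 (Nat.pair φ.godelNumber ψ.godelNumber)
  | _, .subT φ ψ => Nat.pair 7 (Nat.pair φ.godelNumber ψ.godelNumber)
  | _, .absd φ ψ => Nat.pair 8 (Nat.pair φ.godelNumber ψ.godelNumber)
  | _, .scale q φ => Nat.pair 9 (Nat.pair (Encodable.encode q) φ.godelNumber)
  | _, .inf φ => Nat.pair 10 φ.godelNumber
  | _, .sup φ => Nat.pair 11 φ.godelNumber

theorem CFormula.godelNumber_injective {S : CSig} {n : ℕ} :
    Function.Injective (godelNumber : CFormula S n → ℕ) := by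
  intro φ ψ h
  induction φ with
  | rel i ts =>
    cases ψ with
    | rel j ts' =>
      simp only [godelNumber, Nat.pair_eq_pair] at h
      obtain ⟨-, rfl, hts⟩ := h
      rw [Encodable.encode_injective hts]
    | _ => simp [godelNumber, Nat.pair_eq_pair] at h
  | dst | const | fmin _ _ ih ih' | fmax _ _ ih ih' | addT _ _ ih ih' | subT _ _ ih ih'
  | absd _ _ ih ih' | neg _ ih | scale _ _ ih | inf _ ih | sup _ ih =>
    cases ψ <;> simp_all [godelNumber, Nat.pair_eq_pair, Fin.ext_iff] <;> grind

instance {S : CSig} {n : ℕ} : Countable (CFormula S n) :=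
  CFormula.godelNumber_injective.countable

section UniformContinuity

variable {ι X Y : Type*}

theorem abs_ciInf_sub_ciInf_le [Nonempty ι] {a b : ι → ℝ} {ε : ℝ} (ha : BddBelow (Set.range a))
    (hb : BddBelow (Set.range b)) (h : ∀ i, |a i - b i| ≤ ε) :
    |(⨅ i, a i) - ⨅ i, b i| ≤ ε := by
  rw [abs_sub_le_iff, sub_le_iff_le_add', sub_le_iff_le_add', add_comm, add_comm ε]
  exact ⟨le_ciInf_add fun i => by linarith [(abs_le.1 (h i)).2, ciInf_le ha i],
    le_ciInf_add fun i => by linarith [(abs_le.1 (h i)).1, ciInf_le hb i]⟩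

theorem abs_ciSup_sub_ciSup_le [Nonempty ι] {a b : ι → ℝ} {ε : ℝ} (ha : BddAbove (Set.range a))
    (hb : BddAbove (Set.range b)) (h : ∀ i, |a i - b i| ≤ ε) :
    |(⨆ i, a i) - ⨆ i, b i| ≤ ε := by
  rw [abs_sub_le_iff, sub_le_iff_le_add, sub_le_iff_le_add]
  exact ⟨ciSup_le fun i => by linarith [(abs_le.1 (h i)).2, le_ciSup hb i],
    ciSup_le fun i => by linarith [(abs_le.1 (h i)).1, le_ciSup ha i]⟩

variable [PseudoMetricSpace X] [PseudoMetricSpace Y] {f : X → Y → ℝ}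

theorem uniformContinuous_of_abs_sub_le {F : X → ℝ} (hf : UniformContinuous (Function.uncurry f))
    (hF : ∀ x x' ε, (∀ y, |f x y - f x' y| ≤ ε) → |F x - F x'| ≤ ε) : UniformContinuous F := by
  refine Metric.uniformContinuous_iff_le.2 fun ε hε => ?_
  obtain ⟨δ, hδ, h⟩ := Metric.uniformContinuous_iff_le.1 hf ε hε
  refine ⟨δ, hδ, fun x x' hx => hF x x' ε fun y => h (a := (x, y)) (b := (x', y)) ?_⟩
  simp [Prod.dist_eq, hx]

theorem uniformContinuous_ciInf [Nonempty Y] (hf : UniformContinuous (Function.uncurry f))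
    (hb : ∀ x, BddBelow (Set.range (f x))) : UniformContinuous fun x => ⨅ y, f x y :=
  uniformContinuous_of_abs_sub_le hf fun x x' _ => abs_ciInf_sub_ciInf_le (hb x) (hb x')

theorem uniformContinuous_ciSup [Nonempty Y] (hf : UniformContinuous (Function.uncurry f))
    (hb : ∀ x, BddAbove (Set.range (f x))) : UniformContinuous fun x => ⨆ y, f x y :=
  uniformContinuous_of_abs_sub_le hf fun x x' _ => abs_ciSup_sub_ciSup_le (hb x) (hb x')

theorem uniformContinuous_finSnoc {n : ℕ} :
    UniformContinuous fun p : (Fin n → X) × X => (Fin.snoc p.1 p.2 : Fin (n + 1) → X) := by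
  refine uniformContinuous_pi.2 (Fin.lastCases ?_ fun i => ?_)
  · simpa using uniformContinuous_snd
  · simpa [Function.comp_def] using
      (Pi.uniformContinuous_proj (fun _ : Fin n => X) i).comp uniformContinuous_fst

end UniformContinuity

section DenseRange

variable {ι X Y : Type*} [TopologicalSpace X] [TopologicalSpace Y]
  [ConditionallyCompleteLinearOrder Y] {u : ι → X} {f : X → Y}

theorem iInf_comp_of_denseRange [ClosedIciTopology Y] (hu : DenseRange u) (hf : Continuous f) :
    ⨅ i, f (u i) = ⨅ x, f x := by
  rw [← hu.ciInf' hf, ← Set.rangeFactorization_surjective.iInf_comp]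
  rfl

theorem iSup_comp_of_denseRange [ClosedIicTopology Y] (hu : DenseRange u) (hf : Continuous f) :
    ⨆ i, f (u i) = ⨆ x, f x := by
  rw [← hu.ciSup' hf, ← Set.rangeFactorization_surjective.iSup_comp]
  rfl

end DenseRange

theorem clampQ_mem_Icc (q : ℚ) : clampQ q ∈ Set.Icc (0 : ℝ) 1 :=
  ⟨le_max_left _ _, max_le zero_le_one (min_le_left _ _)⟩

namespace CStructure

variable {S : CSig} (M : CStructure S) {n : ℕ}

theorem sval_eq (ψ : CSentence S) (v : Fin 0 → M.Carrier) : M.sval ψ = M.eval 0 ψ v :=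
  congrArg (M.eval 0 ψ) (Subsingleton.elim _ _)

theorem eval_mem_Icc (φ : CFormula S n) (v : Fin n → M.Carrier) :
    M.eval n φ v ∈ Set.Icc (0 : ℝ) 1 := by
  induction φ with
  | dst a b => exact ⟨dist_nonneg, M.bounded _ _⟩
  | rel i ts => exact ⟨M.rel_nonneg _ _, M.rel_le_one _ _⟩
  | const q => exact clampQ_mem_Icc q
  | scale q φ ih =>
    have hq := clampQ_mem_Icc q
    exact ⟨mul_nonneg hq.1 (ih v).1, mul_le_one₀ hq.2 (ih v).1 (ih v).2⟩
  | inf φ ih =>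
    obtain ⟨x⟩ := M.nonempty
    have hb : BddBelow (Set.range fun x => M.eval _ φ (Fin.snoc v x)) :=
      ⟨0, Set.forall_mem_range.2 fun x => (ih _).1⟩
    exact ⟨Real.iInf_nonneg fun x => (ih _).1, (ciInf_le hb x).trans (ih _).2⟩
  | sup φ ih =>
    exact ⟨Real.iSup_nonneg fun x => (ih _).1, Real.iSup_le (fun x => (ih _).2) zero_le_one⟩
  | neg φ ih =>
    have := ih v
    simp only [eval, Set.mem_Icc] at *
    grind
  | fmin φ ψ ih ih' | fmax φ ψ ih ih' | addT φ ψ ih ih' | subT φ ψ ih ih' | absd φ ψ ih ih' =>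
    have := ih v
    have := ih' v
    simp only [eval, Set.mem_Icc] at *
    grind

theorem bddBelow_range_eval {ι : Type*} (φ : CFormula S n) (v : ι → Fin n → M.Carrier) :
    BddBelow (Set.range fun i => M.eval n φ (v i)) :=
  ⟨0, Set.forall_mem_range.2 fun i => (M.eval_mem_Icc φ (v i)).1⟩

theorem bddAbove_range_eval {ι : Type*} (φ : CFormula S n) (v : ι → Fin n → M.Carrier) :
    BddAbove (Set.range fun i => M.eval n φ (v i)) :=
  ⟨1, Set.forall_mem_range.2 fun i => (M.eval_mem_Icc φ (v i)).2⟩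

theorem uniformContinuous_rel (i : ℕ) : UniformContinuous (M.rel i) := by
  refine Metric.uniformContinuous_iff_le.2 fun ε hε => ?_
  have hδ := S.modulus_pos i ε hε
  refine ⟨S.modulus i ε / 2, half_pos hδ, fun v w hvw => M.rel_uc i ε hε v w fun j => ?_⟩
  linarith [dist_le_pi_dist v w j]

theorem uniformContinuous_eval (φ : CFormula S n) : UniformContinuous (M.eval n φ) := by
  induction φ with
  | dst a b => exact (Pi.uniformContinuous_proj _ a).dist (Pi.uniformContinuous_proj _ b)
  | rel i ts =>
    exact (M.uniformContinuous_rel i).comp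
      (uniformContinuous_pi.2 fun j => Pi.uniformContinuous_proj _ (ts j))
  | const q => exact uniformContinuous_const
  | fmin φ ψ ih ih' => exact lipschitzWith_min.uniformContinuous.comp (ih.prodMk ih')
  | fmax φ ψ ih ih' => exact lipschitzWith_max.uniformContinuous.comp (ih.prodMk ih')
  | neg φ ih => exact uniformContinuous_const.sub ih
  | addT φ ψ ih ih' =>
    exact lipschitzWith_min.uniformContinuous.comp (uniformContinuous_const.prodMk (ih.add ih'))
  | subT φ ψ ih ih' =>
    exact lipschitzWith_max.uniformContinuous.comp (uniformContinuous_const.prodMk (ih.sub ih'))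
  | absd φ ψ ih ih' => exact Real.uniformContinuous_abs.comp (ih.sub ih')
  | scale q φ ih => exact ih.const_mul' (clampQ q)
  | inf φ ih =>
    exact uniformContinuous_ciInf (ih.comp uniformContinuous_finSnoc) fun v =>
      M.bddBelow_range_eval φ _
  | sup φ ih =>
    exact uniformContinuous_ciSup (ih.comp uniformContinuous_finSnoc) fun v =>
      M.bddAbove_range_eval φ _

theorem continuous_eval_snoc (φ : CFormula S (n + 1)) (v : Fin n → M.Carrier) :
    Continuous fun x => M.eval (n + 1) φ (Fin.snoc v x) :=
  (M.uniformContinuous_eval φ).continuous.comp (continuous_const.finSnoc continuous_id)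

theorem eval_inf_eq_iInf {ι : Type*} {u : ι → M.Carrier} (hu : DenseRange u)
    (φ : CFormula S (n + 1)) (v : Fin n → M.Carrier) :
    M.eval n φ.inf v = ⨅ i, M.eval (n + 1) φ (Fin.snoc v (u i)) :=
  (iInf_comp_of_denseRange hu (M.continuous_eval_snoc φ v)).symm

theorem eval_sup_eq_iSup {ι : Type*} {u : ι → M.Carrier} (hu : DenseRange u)
    (φ : CFormula S (n + 1)) (v : Fin n → M.Carrier) :
    M.eval n φ.sup v = ⨆ i, M.eval (n + 1) φ (Fin.snoc v (u i)) :=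
  (iSup_comp_of_denseRange hu (M.continuous_eval_snoc φ v)).symm

end CStructure

/-- The atomic diagram of a family of points indexed by `I`: the pseudometric on `I` and the
predicates on `I` that such a family induces from a structure. Distinct indices may be at distance
`0`, since a family may repeat points. -/
@[ext]
structure Diagram (S : CSig) (I : Type*) where
  dd : I → I → ℝ
  R : ∀ i, (Fin (S.arity i) → I) → ℝ
  dd_le_one : ∀ a b, dd a b ≤ 1
  dd_self : ∀ a, dd a a = 0
  dd_symm : ∀ a b, dd a b = dd b a
  dd_triangle : ∀ a b c, dd a c ≤ dd a b + dd b c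
  R_nonneg : ∀ i v, 0 ≤ R i v
  R_le_one : ∀ i v, R i v ≤ 1
  R_uc : ∀ i (ε : ℝ), 0 < ε → ∀ v w,
    (∀ j, dd (v j) (w j) < S.modulus i ε) → |R i v - R i w| ≤ ε

namespace Diagram

variable {S : CSig} {I J : Type*}

/-- The diagram of the reindexed family `j ↦ u (f j)`, in terms of the diagram of `u`. -/
def comap (D : Diagram S I) (f : J → I) : Diagram S J where
  dd a b := D.dd (f a) (f b)
  R i v := D.R i (f ∘ v)
  dd_le_one _ _ := D.dd_le_one _ _
  dd_self _ := D.dd_self _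
  dd_symm _ _ := D.dd_symm _ _
  dd_triangle _ _ _ := D.dd_triangle _ _ _
  R_nonneg _ _ := D.R_nonneg _ _
  R_le_one _ _ := D.R_le_one _ _
  R_uc i ε hε _ _ h := D.R_uc i ε hε _ _ h

/-- The diagram of the subfamily indexed by `A`. -/
def restrict (D : Diagram S I) (A : Set I) : Diagram S A :=
  D.comap Subtype.val

theorem comap_eq_of_restrict_eq {D E : Diagram S I} {A : Set I} (h : D.restrict A = E.restrict A)
    {f : J → I} (hf : ∀ j, f j ∈ A) : D.comap f = E.comap f :=
  congrArg (comap · fun j => (⟨f j, hf j⟩ : A)) h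

theorem restrict_mono {D E : Diagram S I} {A B : Set I} (hBA : B ⊆ A)
    (h : D.restrict A = E.restrict A) : D.restrict B = E.restrict B :=
  comap_eq_of_restrict_eq h fun b => hBA b.2

end Diagram

namespace CStructure

variable {S : CSig} {I J : Type*}

/-- The atomic diagram of the family `u` of points of `M`. -/
def diagram (M : CStructure S) (u : I → M.Carrier) : Diagram S I where
  dd a b := dist (u a) (u b)
  R i v := M.rel i (u ∘ v)
  dd_le_one _ _ := M.bounded _ _
  dd_self _ := dist_self _
  dd_symm _ _ := dist_comm _ _
  dd_triangle _ _ _ := dist_triangle _ _ _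
  R_nonneg _ _ := M.rel_nonneg _ _
  R_le_one _ _ := M.rel_le_one _ _
  R_uc i ε hε _ _ h := M.rel_uc i ε hε _ _ h

variable {M N : CStructure S}

theorem comap_diagram (u : I → M.Carrier) (f : J → I) :
    (M.diagram u).comap f = M.diagram (u ∘ f) :=
  rfl

theorem eval_eq_of_diagram_eq {n : ℕ} {φ : CFormula S n} (hφ : IsQF φ) {v : Fin n → M.Carrier}
    {w : Fin n → N.Carrier} (h : M.diagram v = N.diagram w) : M.eval n φ v = N.eval n φ w := by
  induction hφ with
  | dst a b => exact congrArg (fun D => D.dd a b) h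
  | rel i ts => exact congrArg (fun D => D.R i ts) h
  | _ => simp_all only [eval]

end CStructure

theorem CEmbedding.diagram_comp {S : CSig} {I : Type*} {M N : CStructure S} (f : CEmbedding M N)
    (u : I → M.Carrier) : N.diagram (f.toFun ∘ u) = M.diagram u :=
  Diagram.ext (funext₂ fun _ _ => f.isometry _ _) (funext₂ fun i v => f.map_rel i (u ∘ v))

/-- The diagram of the distinguished dense sequence of a code. -/
def SCode.toDiagram {S : CSig} (x : SCode S) : Diagram S ℕ where
  dd := x.dd
  R := x.R
  dd_le_one := x.dd_le_one
  dd_self := x.dd_self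
  dd_symm := x.dd_symm
  dd_triangle := x.dd_triangle
  R_nonneg := x.R_nonneg
  R_le_one := x.R_le_one
  R_uc := x.R_uc

theorem codes_iff {S : CSig} {x : SCode S} {M : CStructure S} :
    Codes x M ↔ ∃ u : ℕ → M.Carrier, DenseRange u ∧ M.diagram u = x.toDiagram := by
  simp only [Codes, Diagram.ext_iff, funext_iff]
  rfl

section Completion

open UniformSpace (Completion)

theorem subset_of_denseRange_of_isOpen_of_isClosed {X Y : Type*} [TopologicalSpace Y] {u : X → Y}
    (hu : DenseRange u) {O C : Set Y} (hO : IsOpen O) (hC : IsClosed C)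
    (h : ∀ x, u x ∈ O → u x ∈ C) : O ⊆ C :=
  (hu.subset_closure_image_preimage_of_isOpen hO).trans <|
    closure_minimal (Set.image_subset_iff.2 h) hC

namespace Diagram

variable {S : CSig} {I : Type} (D : Diagram S I)

/-- The index set of a diagram, as a type synonym carrying the pseudometric of the diagram. -/
def Point (_ : Diagram S I) : Type := I

instance : PseudoMetricSpace D.Point where
  dist := D.dd
  dist_self := D.dd_self
  dist_comm := D.dd_symm
  dist_triangle := D.dd_triangle

theorem uniformContinuous_R (i : ℕ) :
    UniformContinuous fun v : Fin (S.arity i) → D.Point => D.R i v := by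
  refine Metric.uniformContinuous_iff_le.2 fun ε hε => ?_
  have hδ := S.modulus_pos i ε hε
  refine ⟨S.modulus i ε / 2, half_pos hδ, fun v w hvw => D.R_uc i ε hε v w fun j => ?_⟩
  exact ((dist_le_pi_dist v w j).trans hvw).trans_lt (half_lt_self hδ)

/-- The canonical map from tuples of points to tuples in the completion. -/
def tupleCoe {k : ℕ} (v : Fin k → D.Point) : Fin k → Completion D.Point :=
  fun j => v j

theorem denseRange_tupleCoe (k : ℕ) : DenseRange (D.tupleCoe (k := k)) :=
  DenseRange.piMap fun _ => Completion.denseRange_coe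

theorem isUniformInducing_tupleCoe {k : ℕ} : IsUniformInducing (D.tupleCoe (k := k)) :=
  (Isometry.piMap (fun (_ : Fin k) (a : D.Point) => (a : Completion D.Point))
    fun _ => Completion.coe_isometry).isUniformInducing

/-- The continuous extension of a predicate of `D` to the completion. -/
noncomputable def relExtension (i : ℕ) : (Fin (S.arity i) → Completion D.Point) → ℝ :=
  (D.isUniformInducing_tupleCoe.isDenseInducing (D.denseRange_tupleCoe _)).extend
    fun v => D.R i v

theorem continuous_relExtension (i : ℕ) : Continuous (D.relExtension i) :=
  (uniformContinuous_uniformly_extend D.isUniformInducing_tupleCoe (D.denseRange_tupleCoe _)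
    (D.uniformContinuous_R i)).continuous

theorem relExtension_tupleCoe (i : ℕ) (v : Fin (S.arity i) → D.Point) :
    D.relExtension i (D.tupleCoe v) = D.R i v :=
  uniformly_extend_of_ind D.isUniformInducing_tupleCoe (D.denseRange_tupleCoe _)
    (D.uniformContinuous_R i) v

theorem relExtension_mem_Icc (i : ℕ) (v : Fin (S.arity i) → Completion D.Point) :
    D.relExtension i v ∈ Set.Icc (0 : ℝ) 1 := by
  refine (D.denseRange_tupleCoe _).induction_on v
    (isClosed_Icc.preimage (D.continuous_relExtension i)) fun v => ?_
  rw [relExtension_tupleCoe]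
  exact ⟨D.R_nonneg i v, D.R_le_one i v⟩

theorem abs_relExtension_sub_le (i : ℕ) {ε : ℝ} (hε : 0 < ε)
    {v w : Fin (S.arity i) → Completion D.Point} (h : ∀ j, dist (v j) (w j) < S.modulus i ε) :
    |D.relExtension i v - D.relExtension i w| ≤ ε := by
  let Tuple := Fin (S.arity i) → Completion D.Point
  let O : Set (Tuple × Tuple) := {p | ∀ j, dist (p.1 j) (p.2 j) < S.modulus i ε}
  let C : Set (Tuple × Tuple) := {p | |D.relExtension i p.1 - D.relExtension i p.2| ≤ ε}
  have hO : IsOpen O := by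
    simp only [O, Set.ofPred_forall]
    exact isOpen_iInter_of_finite fun j => isOpen_lt (by fun_prop) continuous_const
  have hC : IsClosed C := by
    have := D.continuous_relExtension i
    exact isClosed_le (by fun_prop) continuous_const
  have hdense := (D.denseRange_tupleCoe (S.arity i)).prodMap (D.denseRange_tupleCoe (S.arity i))
  have hOC : O ⊆ C := by
    refine subset_of_denseRange_of_isOpen_of_isClosed hdense hO hC fun ⟨v, w⟩ hvw => ?_
    change |D.relExtension i (D.tupleCoe v) - D.relExtension i (D.tupleCoe w)| ≤ ε
    rw [relExtension_tupleCoe, relExtension_tupleCoe]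
    exact D.R_uc i ε hε v w fun j => (Completion.dist_eq (v j) (w j)).symm.trans_lt (hvw j)
  exact hOC (a := (v, w)) h

/-- The structure obtained by completing the pseudometric space of a diagram. -/
noncomputable def completion [Nonempty I] : CStructure S where
  Carrier := Completion D.Point
  metric := inferInstance
  nonempty := (Completion.nonempty_completion_iff D.Point).2 ‹Nonempty I›
  complete := inferInstance
  bounded a b := by
    refine Completion.induction_on₂ a b (isClosed_le continuous_dist continuous_const) ?_
    exact fun a b => (Completion.dist_eq a b).trans_le (D.dd_le_one a b)
  rel := D.relExtension
  rel_nonneg i v := (D.relExtension_mem_Icc i v).1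
  rel_le_one i v := (D.relExtension_mem_Icc i v).2
  rel_uc i _ hε _ _ := D.abs_relExtension_sub_le i hε

/-- The family of points of the completion named by the indices. -/
noncomputable def point [Nonempty I] (a : I) : D.completion.Carrier :=
  ((show D.Point from a) : Completion D.Point)

theorem denseRange_point [Nonempty I] : DenseRange D.point :=
  Completion.denseRange_coe (α := D.Point)

theorem diagram_point [Nonempty I] : D.completion.diagram D.point = D :=
  Diagram.ext (funext₂ fun a b => Completion.dist_eq (α := D.Point) a b)
    (funext₂ fun i v => D.relExtension_tupleCoe i v)

end Diagram

end Completion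

namespace SCode

variable {S : CSig} {x y : SCode S} {M : CStructure S}

theorem eval_eq {u : ℕ → M.Carrier} (hu : DenseRange u) (hx : M.diagram u = x.toDiagram) {n : ℕ}
    (φ : CFormula S n) (a : Fin n → ℕ) : x.eval n φ a = M.eval n φ (u ∘ a) := by
  induction φ with
  | dst i j => exact (congrArg (fun D => D.dd (a i) (a j)) hx).symm
  | rel i ts => exact (congrArg (fun D => D.R i (a ∘ ts)) hx).symm
  | inf φ ih => simp only [M.eval_inf_eq_iInf hu, eval, ih, Fin.comp_snoc]
  | sup φ ih => simp only [M.eval_sup_eq_iSup hu, eval, ih, Fin.comp_snoc]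
  | _ => simp_all only [eval, CStructure.eval]

theorem satT_iff (h : Codes x M) (T : CTheory S) : x.SatT T ↔ M.SatT T := by
  obtain ⟨u, hu, hx⟩ := codes_iff.1 h
  have hsval (ψ : CSentence S) : x.sval ψ = M.sval ψ :=
    (eval_eq hu hx ψ _).trans (M.sval_eq ψ _).symm
  simp only [SatT, CStructure.SatT, hsval]

theorem codes_completion (x : SCode S) : Codes x x.toDiagram.completion :=
  codes_iff.2 ⟨_, x.toDiagram.denseRange_point, x.toDiagram.diagram_point⟩

theorem eval_eq_of_comap_eq {n : ℕ} {φ : CFormula S n} (hφ : IsQF φ) {a : Fin n → ℕ}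
    (h : x.toDiagram.comap a = y.toDiagram.comap a) : x.eval n φ a = y.eval n φ a := by
  obtain ⟨u, hu, hx⟩ := codes_iff.1 x.codes_completion
  obtain ⟨v, hv, hy⟩ := codes_iff.1 y.codes_completion
  rw [eval_eq hu hx, eval_eq hv hy]
  refine CStructure.eval_eq_of_diagram_eq hφ ?_
  rw [← CStructure.comap_diagram, ← CStructure.comap_diagram, hx, hy, h]

theorem tendsto_nhds_of_eventually_comap_eq {ι : Type*} {l : Filter ι} {y : ι → SCode S}
    (h : ∀ (n : ℕ) (a : Fin n → ℕ),
      ∀ᶠ s in l, (y s).toDiagram.comap a = x.toDiagram.comap a) :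
    Filter.Tendsto y l (nhds x) := by
  refine TopologicalSpace.tendsto_nhds_generateFrom_iff.2 ?_
  rintro _ ⟨n, φ, a, ε, hφ, -, rfl⟩ hx
  filter_upwards [h n a] with s hs
  exact (eval_eq_of_comap_eq hφ hs).trans_lt hx

end SCode

/-- The code of a structure presented on the points of an injective sequence. -/
def CStructure.code {S : CSig} (M : CStructure S) (e : ℕ → M.Carrier)
    (he : Function.Injective e) : SCode S where
  __ := M.diagram e
  dd_nonneg _ _ := dist_nonneg
  dd_pos _ _ hij := dist_pos.2 (he.ne hij)

theorem CStructure.codes_code {S : CSig} (M : CStructure S) {e : ℕ → M.Carrier}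
    (he : Function.Injective e) (hd : DenseRange e) : Codes (M.code e he) M :=
  codes_iff.2 ⟨e, hd, rfl⟩

theorem SCode.injective_of_diagram_eq {S : CSig} {x : SCode S} {M : CStructure S}
    {u : ℕ → M.Carrier} (h : M.diagram u = x.toDiagram) : Function.Injective u := by
  intro i j hij
  by_contra hne
  have hdist : dist (u i) (u j) = x.dd i j := congrArg (fun D => D.dd i j) h
  exact (x.dd_pos i j hne).ne (by rw [← hdist, hij, dist_self])

section Universal

variable {S : CSig} {I : Type*} {N : CStructure S} {u : I → N.Carrier}

theorem SupCl.exists_finite_forall_lt_eval {n : ℕ} {φ : CFormula S n}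
    (hφ : SupCl (fun _ ψ => IsQF ψ) φ) (hu : DenseRange u) {a : Fin n → I} {c : ℝ}
    (hc : c < N.eval n φ (u ∘ a)) :
    ∃ A : Set I, A.Finite ∧ ∀ (M : CStructure S) (v : I → M.Carrier),
      (M.diagram v).restrict A = (N.diagram u).restrict A → c < M.eval n φ (v ∘ a) := by
  induction hφ with
  | base hφ =>
    refine ⟨Set.range a, Set.finite_range a, fun M v h => ?_⟩
    have hdiag : M.diagram (v ∘ a) = N.diagram (u ∘ a) :=
      Diagram.comap_eq_of_restrict_eq h Set.mem_range_self
    rwa [CStructure.eval_eq_of_diagram_eq hφ hdiag]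
  | step _ ih =>
    have := hu.nonempty_iff.2 N.nonempty
    rw [N.eval_sup_eq_iSup hu] at hc
    obtain ⟨i, hi⟩ := exists_lt_of_lt_ciSup hc
    rw [← Fin.comp_snoc] at hi
    obtain ⟨A, hA, hlt⟩ := ih hi
    refine ⟨A, hA, fun M v h => (hlt M v h).trans_le ?_⟩
    rw [Fin.comp_snoc]
    exact le_ciSup (M.bddAbove_range_eval _ _) (v i)

theorem IsUniversalTheory.satT_of_forall_finite {T : CTheory S} (hU : IsUniversalTheory T)
    (hu : DenseRange u)
    (h : ∀ A : Set I, A.Finite → ∃ (M : CStructure S) (v : I → M.Carrier),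
      M.SatT T ∧ (M.diagram v).restrict A = (N.diagram u).restrict A) : N.SatT T := by
  obtain ⟨Ax, hPi, hAx⟩ := hU
  refine (hAx N).2 fun ψ hψ => (not_lt.1 fun hpos => ?_).antisymm (N.eval_mem_Icc ψ _).1
  rw [N.sval_eq ψ (u ∘ Fin.elim0)] at hpos
  obtain ⟨A, hA, hlt⟩ := SupCl.exists_finite_forall_lt_eval (hPi ψ hψ) hu hpos
  obtain ⟨M, v, hM, hMA⟩ := h A hA
  have hMψ : M.eval 0 ψ (v ∘ Fin.elim0) = 0 := by rw [← M.sval_eq, (hAx M).1 hM ψ hψ]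
  exact (hlt M v hMA).ne' hMψ

end Universal

section Limit

open Filter

variable {S : CSig} {I : Type*}

theorem Diagram.exists_eventually_eq {ι : Type*} {l : Filter ι} [l.NeBot] (D : ι → Diagram S I)
    (hdd : ∀ a b, ∃ r, ∀ᶠ s in l, (D s).dd a b = r)
    (hR : ∀ i v, ∃ r, ∀ᶠ s in l, (D s).R i v = r) :
    ∃ L : Diagram S I, (∀ a b, ∀ᶠ s in l, (D s).dd a b = L.dd a b) ∧
      ∀ i v, ∀ᶠ s in l, (D s).R i v = L.R i v := by
  choose dd hdd using hdd
  choose R hR using hR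
  refine ⟨{ dd, R, dd_le_one a b := ?_, dd_self a := ?_, dd_symm a b := ?_,
            dd_triangle a b c := ?_, R_nonneg i v := ?_, R_le_one i v := ?_,
            R_uc i ε hε v w h := ?_ }, hdd, hR⟩
  · obtain ⟨s, hs⟩ := (hdd a b).exists
    exact hs ▸ (D s).dd_le_one a b
  · obtain ⟨s, hs⟩ := (hdd a a).exists
    exact hs ▸ (D s).dd_self a
  · obtain ⟨s, hs, hs'⟩ := ((hdd a b).and (hdd b a)).exists
    exact hs ▸ hs' ▸ (D s).dd_symm a b
  · obtain ⟨s, hac, hab, hbc⟩ := ((hdd a c).and ((hdd a b).and (hdd b c))).exists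
    exact hac ▸ hab ▸ hbc ▸ (D s).dd_triangle a b c
  · obtain ⟨s, hs⟩ := (hR i v).exists
    exact hs ▸ (D s).R_nonneg i v
  · obtain ⟨s, hs⟩ := (hR i v).exists
    exact hs ▸ (D s).R_le_one i v
  · have hvw := eventually_all.2 fun j => hdd (v j) (w j)
    obtain ⟨s, hv, hw, hs⟩ := ((hR i v).and ((hR i w).and hvw)).exists
    rw [← hv, ← hw]
    exact (D s).R_uc i ε hε v w fun j => (hs j).trans_lt (h j)

theorem Diagram.exists_forall_restrict_eq (D : ℕ → Diagram S I) {F : ℕ → Set I} (hF : Monotone F)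
    (hcover : ∀ a, ∀ᶠ s in atTop, a ∈ F s)
    (hD : ∀ s, (D (s + 1)).restrict (F s) = (D s).restrict (F s)) :
    ∃ L : Diagram S I, ∀ s, L.restrict (F s) = (D s).restrict (F s) := by
  have hcoh {s t : ℕ} (hst : s ≤ t) : (D t).restrict (F s) = (D s).restrict (F s) := by
    induction t, hst using Nat.le_induction with
    | base => rfl
    | succ t hst ih => exact (restrict_mono (hF hst) (hD t)).trans ih
  have hdd {s t : ℕ} (hst : s ≤ t) {a b : I} (ha : a ∈ F s) (hb : b ∈ F s) :
      (D t).dd a b = (D s).dd a b :=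
    congrArg (fun E => E.dd ⟨a, ha⟩ ⟨b, hb⟩) (hcoh hst)
  have hR {s t : ℕ} (hst : s ≤ t) {i : ℕ} {v : Fin (S.arity i) → I} (hv : ∀ j, v j ∈ F s) :
      (D t).R i v = (D s).R i v :=
    congrArg (fun E => E.R i fun j => ⟨v j, hv j⟩) (hcoh hst)
  obtain ⟨L, hLdd, hLR⟩ := exists_eventually_eq (l := atTop) D
    (fun a b => by
      obtain ⟨s, ha, hb⟩ := ((hcover a).and (hcover b)).exists
      exact ⟨_, eventually_atTop.2 ⟨s, fun t hst => hdd hst ha hb⟩⟩)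
    (fun i v => by
      obtain ⟨s, hv⟩ := (eventually_all.2 fun j => hcover (v j)).exists
      exact ⟨_, eventually_atTop.2 ⟨s, fun t hst => hR hst hv⟩⟩)
  refine ⟨L, fun s => Diagram.ext (funext₂ fun a b => ?_) (funext₂ fun i v => ?_)⟩
  · obtain ⟨t, ht, hst⟩ := ((hLdd a b).and (eventually_ge_atTop s)).exists
    exact ht.symm.trans (hdd hst a.2 b.2)
  · obtain ⟨t, ht, hst⟩ := ((hLR i (Subtype.val ∘ v)).and (eventually_ge_atTop s)).exists
    exact ht.symm.trans (hR hst fun j => (v j).2)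

end Limit

section InfProblem

variable {S : CSig} {T : CTheory S} {I : Type*}

/-- A model of `T` together with a family of points named by `I`, which need be neither dense nor
injective. -/
structure NamedModel (T : CTheory S) (I : Type*) where
  model : CStructure S
  point : I → model.Carrier
  satT : model.SatT T

/-- An instance of the task of realizing an infimum: a formula `φ(x̄, y)`, where `y` is the last
variable, and names for the parameters `x̄`. -/
abbrev InfProblem (S : CSig) (I : Type*) :=
  Σ n : ℕ, CFormula S (n + 1) × (Fin n → I)

namespace NamedModel

/-- The atomic diagram of the named points. -/
def diagram (B : NamedModel T I) : Diagram S I :=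
  B.model.diagram B.point

/-- The value of a formula at a tuple of named points. -/
noncomputable def eval (B : NamedModel T I) {n : ℕ} (φ : CFormula S n) (a : Fin n → I) : ℝ :=
  B.model.eval n φ (B.point ∘ a)

/-- If the parameters of `q` lie in `F`, the point named `c` solves `q` in `B` up to `ε`, even when
compared with all models of `T` whose points named by `F` have the same atomic diagram. -/
def NearlyMinimizes (B : NamedModel T I) (F : Set I) (q : InfProblem S I) (c : I) (ε : ℝ) : Prop :=
  (∀ j, q.2.2 j ∈ F) → ∀ C : NamedModel T I, C.diagram.restrict F = B.diagram.restrict F →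
    B.eval q.2.1 (Fin.snoc q.2.2 c) ≤ C.eval q.2.1.inf q.2.2 + ε

theorem exists_nearlyMinimizes (A : NamedModel T I) {F : Set I} {c : I} (hc : c ∉ F)
    (q : InfProblem S I) {ε : ℝ} (hε : 0 < ε) :
    ∃ B : NamedModel T I, B.diagram.restrict F = A.diagram.restrict F ∧
      B.NearlyMinimizes F q c ε := by
  obtain ⟨n, φ, a⟩ := q
  let values : Set ℝ :=
    {r | ∃ C : NamedModel T I, C.diagram.restrict F = A.diagram.restrict F ∧ C.eval φ.inf a = r}
  have hbdd : BddBelow values := by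
    refine ⟨0, ?_⟩
    rintro _ ⟨C, -, rfl⟩
    exact (C.model.eval_mem_Icc _ _).1
  obtain ⟨_, ⟨C, hCA, rfl⟩, hC⟩ := Real.lt_sInf_add_pos (s := values) ⟨_, A, rfl, rfl⟩ hε
  obtain ⟨x, hx⟩ := exists_lt_of_ciInf_lt hC
  let B : NamedModel T I := ⟨C.model, Function.update C.point c x, C.satT⟩
  have hBC : ∀ i ∈ F, B.point i = C.point i := fun i hi =>
    Function.update_of_ne (ne_of_mem_of_not_mem hi hc) _ _
  have hBF : B.point ∘ ((↑) : F → I) = C.point ∘ (↑) := funext fun i => hBC i i.2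
  have hBA : B.diagram.restrict F = A.diagram.restrict F :=
    (congrArg C.model.diagram hBF).trans hCA
  refine ⟨B, hBA, fun ha E hE => ?_⟩
  have hBa : B.point ∘ Fin.snoc a c = Fin.snoc (C.point ∘ a) x := by
    rw [Fin.comp_snoc]
    exact congrArg₂ Fin.snoc (funext fun j => hBC _ (ha j)) (Function.update_self c x C.point)
  have hE_le : sInf values ≤ E.eval φ.inf a := csInf_le hbdd ⟨E, hE.trans hBA, rfl⟩
  calc B.eval φ (Fin.snoc a c) = C.model.eval (n + 1) φ (Fin.snoc (C.point ∘ a) x) :=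
        congrArg (C.model.eval (n + 1) φ) hBa
    _ ≤ sInf values + ε := hx.le
    _ ≤ E.eval φ.inf a + ε := by gcongr

theorem exists_seq_nearlyMinimizes (A : NamedModel T I) {F : ℕ → Set I} {c : ℕ → I}
    (hc : ∀ s, c s ∉ F s) (q : ℕ → InfProblem S I) :
    ∃ B : ℕ → NamedModel T I, B 0 = A ∧ ∀ s,
      (B (s + 1)).diagram.restrict (F s) = (B s).diagram.restrict (F s) ∧
      (B (s + 1)).NearlyMinimizes (F s) (q s) (c s) (1 / (s + 1)) := by
  choose next hnext using fun (s : ℕ) (B : NamedModel T I) =>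
    B.exists_nearlyMinimizes (hc s) (q s) (Nat.one_div_pos_of_nat (α := ℝ) (n := s))
  exact ⟨fun s => Nat.rec A next s, rfl, fun s => hnext s _⟩

end NamedModel

end InfProblem

section ExistentiallyClosed

open Filter

variable {S : CSig} {T : CTheory S}

theorem CEmbedding.eval_inf_comp_le {M N : CStructure S} (f : CEmbedding M N) {n : ℕ}
    {φ : CFormula S (n + 1)} (hφ : IsQF φ) (b : Fin n → M.Carrier) :
    N.eval n φ.inf (f.toFun ∘ b) ≤ M.eval n φ.inf b := by
  refine le_ciInf fun x => ?_
  rw [← CStructure.eval_eq_of_diagram_eq hφ (f.diagram_comp (Fin.snoc b x)), Fin.comp_snoc]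
  exact ciInf_le (N.bddBelow_range_eval φ _) (f.toFun x)

theorem isEC_of_denseRange {I : Type*} {M : CStructure S} (hM : M.SatT T) {u : I → M.Carrier}
    (hu : DenseRange u)
    (h : ∀ N : CStructure S, N.SatT T → ∀ f : CEmbedding M N, ∀ (n : ℕ) (φ : CFormula S (n + 1)),
      IsQF φ → ∀ a : Fin n → I, M.eval n φ.inf (u ∘ a) ≤ N.eval n φ.inf (f.toFun ∘ u ∘ a)) :
    IsEC T M := by
  refine ⟨hM, fun N hN f n φ hφ b => (f.eval_inf_comp_le hφ b).antisymm ?_⟩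
  have hf : Continuous f.toFun := (Isometry.of_dist_eq f.isometry).continuous
  have hN_cont : Continuous fun b : Fin n → M.Carrier => N.eval n φ.inf (f.toFun ∘ b) :=
    (N.uniformContinuous_eval φ.inf).continuous.comp (continuous_pi fun j => by fun_prop)
  exact (DenseRange.piMap fun _ : Fin n => hu).induction_on b
    (isClosed_le (M.uniformContinuous_eval φ.inf).continuous hN_cont) (h N hN f n φ hφ)

namespace NamedModel

theorem exists_limit (hU : IsUniversalTheory T) {I : Type} [Nonempty I] {B : ℕ → NamedModel T I}
    {F : ℕ → Set I} (hF_mono : Monotone F) (hF : ∀ a, ∀ᶠ s in atTop, a ∈ F s)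
    (hB : ∀ s, (B (s + 1)).diagram.restrict (F s) = (B s).diagram.restrict (F s)) :
    ∃ (M : CStructure S) (u : I → M.Carrier), M.SatT T ∧ DenseRange u ∧
      ∀ s, (M.diagram u).restrict (F s) = (B s).diagram.restrict (F s) := by
  obtain ⟨L, hL⟩ := Diagram.exists_forall_restrict_eq (fun s => (B s).diagram) hF_mono hF hB
  rw [← L.diagram_point] at hL
  refine ⟨L.completion, L.point, ?_, L.denseRange_point, hL⟩
  refine hU.satT_of_forall_finite L.denseRange_point fun A hA => ?_
  obtain ⟨s, hs⟩ := ((eventually_all_finite hA).2 fun a _ => hF a).exists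
  exact ⟨(B s).model, (B s).point, (B s).satT, (Diagram.restrict_mono hs (hL s)).symm⟩

theorem isEC_of_nearlyMinimizes {I : Type*} {B : ℕ → NamedModel T I} {F : ℕ → Set I}
    (hF_mono : Monotone F) (hF : ∀ a, ∀ᶠ s in atTop, a ∈ F s) {c : ℕ → I}
    (hc : ∀ s, c s ∈ F (s + 1)) {q : ℕ → InfProblem S I} (hq : ∀ p, ∃ᶠ s in atTop, q s = p)
    (hB : ∀ s, (B (s + 1)).NearlyMinimizes (F s) (q s) (c s) (1 / (s + 1)))
    {M : CStructure S} (hM : M.SatT T) {u : I → M.Carrier} (hu : DenseRange u)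
    (hMB : ∀ s, (M.diagram u).restrict (F s) = (B s).diagram.restrict (F s)) : IsEC T M := by
  refine isEC_of_denseRange hM hu fun N hN f n φ hφ a => le_of_forall_pos_le_add fun ε hε => ?_
  have hε_ev : ∀ᶠ s : ℕ in atTop, 1 / ((s : ℝ) + 1) < ε :=
    tendsto_one_div_add_atTop_nhds_zero_nat.eventually_lt_const hε
  have ha_ev : ∀ᶠ s in atTop, ∀ j, a j ∈ F s := eventually_all.2 fun j => hF (a j)
  obtain ⟨s, hs, ha, hsε⟩ := ((hq ⟨n, φ, a⟩).and_eventually (ha_ev.and hε_ev)).exists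
  -- The extension `N` is one of the competitors over which the `s`-th infimum was taken.
  let C : NamedModel T I := ⟨N, f.toFun ∘ u, hN⟩
  have hCB : C.diagram.restrict (F s) = (B (s + 1)).diagram.restrict (F s) := by
    rw [← Diagram.restrict_mono (hF_mono s.le_succ) (hMB (s + 1))]
    exact congrArg (Diagram.restrict · (F s)) (f.diagram_comp u)
  have hmem : ∀ j, (Fin.snoc a (c s) : Fin (n + 1) → I) j ∈ F (s + 1) :=
    Fin.lastCases (by simpa using hc s) fun j => by simpa using hF_mono s.le_succ (ha j)
  have hBM : (B (s + 1)).eval φ (Fin.snoc a (c s)) = M.eval (n + 1) φ (u ∘ Fin.snoc a (c s)) :=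
    CStructure.eval_eq_of_diagram_eq hφ (Diagram.comap_eq_of_restrict_eq (hMB (s + 1)).symm hmem)
  have hmin := hB s
  rw [hs] at hmin
  calc M.eval n φ.inf (u ∘ a) ≤ M.eval (n + 1) φ (Fin.snoc (u ∘ a) (u (c s))) :=
        ciInf_le (M.bddBelow_range_eval φ _) _
    _ = (B (s + 1)).eval φ (Fin.snoc a (c s)) := by rw [hBM, Fin.comp_snoc]
    _ ≤ C.eval φ.inf a + 1 / (s + 1) := hmin ha C hCB
    _ ≤ N.eval n φ.inf (f.toFun ∘ u ∘ a) + ε := by gcongr; rfl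

end NamedModel

theorem exists_seq_frequently_eq (α : Type*) [Countable α] [Nonempty α] :
    ∃ r : ℕ → α, ∀ p, ∃ᶠ s in atTop, r s = p := by
  obtain ⟨g, hg⟩ := exists_surjective_nat α
  refine ⟨fun s => g s.unpair.1, fun p => frequently_atTop.2 fun s => ?_⟩
  obtain ⟨k, rfl⟩ := hg p
  exact ⟨Nat.pair k s, Nat.right_le_pair k s, by simp⟩

theorem IsUniversalTheory.exists_isEC_diagram_eq (hU : IsUniversalTheory T) {M : CStructure S}
    (hM : M.SatT T) {I : Type} [Countable I] (w : I → M.Carrier) :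
    ∃ (N : CStructure S) (v : I → N.Carrier), IsEC T N ∧
      TopologicalSpace.SeparableSpace N.Carrier ∧ N.diagram v = M.diagram w := by
  let F (s : ℕ) : Set (I ⊕ ℕ) := {x | ∀ k, x = Sum.inr k → k < s}
  have hF_mono : Monotone F := fun s t hst x hx k hk => (hx k hk).trans_le hst
  have hF : ∀ x, ∀ᶠ s in atTop, x ∈ F s := by
    rintro (a | k)
    · exact .of_forall fun s => by simp [F]
    · filter_upwards [eventually_gt_atTop k] with s hs
      simpa [F] using hs
  have hc_notMem (s : ℕ) : Sum.inr s ∉ F s := by simp [F]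
  have hc_mem (s : ℕ) : Sum.inr s ∈ F (s + 1) := by simp [F]
  have : Nonempty (InfProblem S (I ⊕ ℕ)) := ⟨⟨0, .const 0, Fin.elim0⟩⟩
  obtain ⟨q, hq⟩ := exists_seq_frequently_eq (InfProblem S (I ⊕ ℕ))
  obtain ⟨x₀⟩ := M.nonempty
  let A : NamedModel T (I ⊕ ℕ) := ⟨M, Sum.elim w fun _ => x₀, hM⟩
  obtain ⟨B, hB0, hB⟩ := A.exists_seq_nearlyMinimizes hc_notMem q
  obtain ⟨N, u, hN, hu, hNB⟩ := NamedModel.exists_limit hU hF_mono hF fun s => (hB s).1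
  have hEC : IsEC T N :=
    NamedModel.isEC_of_nearlyMinimizes hF_mono hF hc_mem hq (fun s => (hB s).2) hN hu hNB
  have hinl (i : I) : Sum.inl i ∈ F 0 := by simp [F]
  refine ⟨N, u ∘ Sum.inl, hEC, ⟨_, Set.countable_range u, hu⟩, ?_⟩
  exact (Diagram.comap_eq_of_restrict_eq (hNB 0) hinl).trans
    (congrArg (fun B : NamedModel T _ => B.diagram.comap Sum.inl) hB0)

end ExistentiallyClosed

theorem exists_injective_denseRange_eqOn {ι X : Type*} [Countable ι] [Infinite ι]
    [TopologicalSpace X] [TopologicalSpace.SeparableSpace X] {v : ι → X}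
    (hv : Function.Injective v) {A : Set ι} (hA : A.Finite) :
    ∃ e : ι → X, Function.Injective e ∧ DenseRange e ∧ Set.EqOn e v A := by
  obtain ⟨D, hD, hD_dense⟩ := TopologicalSpace.exists_countable_dense X
  let E : Set X := Set.range v ∪ D
  have : Countable E := ((Set.countable_range v).union hD).to_subtype
  have : Infinite E := ((Set.infinite_range_of_injective hv).mono Set.subset_union_left).to_subtype
  let v' : A ↪ E := ⟨fun i => ⟨v i, .inl ⟨i, rfl⟩⟩, fun i j h =>
    Subtype.ext (hv (congrArg Subtype.val h))⟩
  have hA_lt : Cardinal.mk A < Cardinal.mk ι := hA.lt_aleph0.trans_le (Cardinal.aleph0_le_mk ι)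
  obtain ⟨g, hg⟩ := Cardinal.extend_function_of_lt v' hA_lt nonempty_equiv_of_countable
  refine ⟨fun i => g i, Subtype.val_injective.comp g.injective, ?_,
    fun i hi => congrArg Subtype.val (hg ⟨i, hi⟩)⟩
  exact hD_dense.mono fun x hx => ⟨g.symm ⟨x, .inr hx⟩, by simp⟩

theorem CStructure.exists_seq_codes_tendsto {S : CSig} {N : CStructure S}
    [TopologicalSpace.SeparableSpace N.Carrier] {x : SCode S} {v : ℕ → N.Carrier}
    (hv : N.diagram v = x.toDiagram) :
    ∃ y : ℕ → SCode S, (∀ k, Codes (y k) N) ∧ Filter.Tendsto y Filter.atTop (nhds x) := by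
  choose e he hd heq using fun k : ℕ =>
    exists_injective_denseRange_eqOn (SCode.injective_of_diagram_eq hv) (Set.finite_Iio k)
  refine ⟨fun k => N.code (e k) (he k), fun k => N.codes_code (he k) (hd k), ?_⟩
  refine SCode.tendsto_nhds_of_eventually_comap_eq fun n a => ?_
  filter_upwards [Filter.eventually_all.2 fun j => Filter.eventually_gt_atTop (a j)] with k hk
  have hcomp : e k ∘ a = v ∘ a := funext fun j => heq k (hk j)
  exact (congrArg N.diagram hcomp).trans (congrArg (Diagram.comap · a) hv)

/-- For a universal theory `T`, the set of separable existentially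
closed models of `T` is dense in `𝔖_T`. -/
theorem ec_dense_in_ST (S : CSig) (T : CTheory S) (hT : IsTheory T)
    (hU : IsUniversalTheory T) :
    Dense {y : {x : SCode S // x.SatT T} | ∃ M : CStructure S, Codes y.1 M ∧ IsEC T M} := by
  rintro ⟨x, hx⟩
  have hM : x.toDiagram.completion.SatT T := (SCode.satT_iff x.codes_completion T).1 hx
  obtain ⟨N, v, hN, hsep, hv⟩ := hU.exists_isEC_diagram_eq hM x.toDiagram.point
  obtain ⟨y, hyN, hyx⟩ := CStructure.exists_seq_codes_tendsto (hv.trans x.toDiagram.diagram_point)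
  exact mem_closure_of_tendsto
    (f := fun k => ⟨y k, (SCode.satT_iff (hyN k) T).2 hN.1⟩) (tendsto_subtype_rng.2 hyx)
    (.of_forall fun k => ⟨N, hyN k, hN⟩)
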